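/- arXiv:2405.14387 — 2 statements merged into one kernel-verified Lean document; each statement's English description precedes it below -/
import Mathlib

section
/- Let δ > 0 and α ≥ 3δ. Let G be a group acting by isometries on a δ-hyperbolic geodesic metric space X, and let U ⊆ G be a finite subset that is α-reduced at a point p ∈ X. Let w ≡ u₁⋯u_m (with m ≥ 1) and w' ≡ u₁'⋯u'_{m'} be reduced words over U ∪ U⁻¹, regarded as elements of the free group F(U). If (p, w'p)_{wp} ≤ (1/2)·d(u_m p, p), then w is a prefix of w', i.e. there is v ∈ F(U) with w' = wv and |w'|_U = |w|_U + |v|_U. -/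
/-!
Write `|u| = d(u p, p)`.  The carrier of the proof is `gromov_last`: for a reduced word
`v = v₁ ⋯ vₙ`, the geodesic from `v p` back to `p` starts along the last edge, in the sense that
`(p, v vₙ⁻¹ p)_{v p} ≥ |vₙ| / 2 + α + 49 δ`.  It follows by induction on `n`: the induction
hypothesis says that `p` and the next to last vertex are close as seen from the current vertex, so
hyperbolicity transfers the small Gromov product at each corner, which is given by the
`α`-reducedness of `U`, to a small Gromov product between `p` and the next vertex.

Suppose now that `w` is not a prefix of `w'`.  After cancelling the common prefix, `w'⁻¹ w` is
represented by a reduced word that still ends with the last letter `u` of `w`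
(`exists_reduced_quotient`).  Applying `gromov_last` to `w` and to this word, translated by `w'`,
shows that both `p` and `w' p` have Gromov product at least `|u| / 2 + α + 49 δ` with `w u⁻¹ p`
based at `w p`.  Hyperbolicity gives `(p, w' p)_{w p} ≥ |u| / 2 + α + 48 δ > |u| / 2`.
-/

open Pointwise Filter

noncomputable section

universe u v

/-- The Gromov product `(x,y)_t`. -/
def gromov {X : Type*} [MetricSpace X] (x y t : X) : ℝ :=
  (dist x t + dist y t - dist x y) / 2

/-- `X` is `δ`-hyperbolic (four point inequality). -/
def IsDeltaHyperbolic (X : Type*) [MetricSpace X] (δ : ℝ) : Prop :=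
  ∀ x y z t : X, min (gromov x y t) (gromov y z t) - δ ≤ gromov x z t

/-- `X` is a geodesic metric space: any two points are joined by an isometric
embedding of a closed real interval. -/
def IsGeodesicSpace (X : Type*) [MetricSpace X] : Prop :=
  ∀ x y : X, ∃ f : ℝ → X, f 0 = x ∧ f (dist x y) = y ∧
    ∀ s ∈ Set.Icc (0 : ℝ) (dist x y), ∀ t ∈ Set.Icc (0 : ℝ) (dist x y),
      dist (f s) (f t) = |s - t|

/-- The action of `G` on `X` is by isometries. -/
def IsometricAction (G X : Type*) [Group G] [MetricSpace X] [MulAction G X] : Prop :=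
  ∀ g : G, Isometry fun x : X => g • x

/-- The action of `G` on `X` is `(κ,N)`-acylindrical (relative to the
hyperbolicity constant `δ`). -/
def AcylindricalAction (G X : Type*) [Group G] [MetricSpace X] [MulAction G X]
    (δ κ N : ℝ) : Prop :=
  ∀ x y : X, κ ≤ dist x y →
    {g : G | dist (g • x) x ≤ 100 * δ ∧ dist (g • y) y ≤ 100 * δ}.Finite ∧
    ({g : G | dist (g • x) x ≤ 100 * δ ∧ dist (g • y) y ≤ 100 * δ}.ncard : ℝ) ≤ N

/-- `L(U,x)`, the `ℓ^∞`-energy of `U` at `x`. -/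
def energyAt {G X : Type*} [Group G] [MetricSpace X] [MulAction G X]
    (U : Set G) (x : X) : ℝ :=
  sSup ((fun u : G => dist (u • x) x) '' U)

/-- `L(U)`, the `ℓ^∞`-energy of `U`. -/
def energy {G : Type*} (X : Type*) [Group G] [MetricSpace X] [MulAction G X]
    (U : Set G) : ℝ :=
  sInf (Set.range fun x : X => energyAt U x)

/-- The stable translation length `‖g‖^∞`, computed at the point `x` (for an
isometric action, by Fekete's subadditive lemma this infimum equals the limit of
`d(gⁿx,x)/n` and is independent of `x`). -/
def stableLength {G X : Type*} [Group G] [MetricSpace X] [MulAction G X]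
    (g : G) (x : X) : ℝ :=
  ⨅ n : ℕ+, dist ((g ^ (n : ℕ)) • x) x / ((n : ℕ) : ℝ)

/-- `g` is loxodromic for the action on `X`. -/
def IsLoxodromic {G : Type*} (X : Type*) [Group G] [MetricSpace X] [MulAction G X]
    (g : G) : Prop :=
  ∀ x : X, 0 < stableLength g x

/-- The translation length `‖g‖`. -/
def translationLength {G : Type*} (X : Type*) [Group G] [MetricSpace X] [MulAction G X]
    (g : G) : ℝ :=
  sInf (Set.range fun x : X => dist (g • x) x)

/-- The axis of `g`. -/
def axisOf {G X : Type*} [Group G] [MetricSpace X] [MulAction G X]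
    (δ : ℝ) (g : G) : Set X :=
  {x : X | dist (g • x) x ≤ translationLength X g + 8 * δ}

/-- The exponential growth rate `ω(U) = limsup (1/n) log |Uⁿ|`. -/
def growthRate {G : Type*} [Group G] (U : Set G) : ℝ :=
  limsup (fun n : ℕ => Real.log ((U ^ n).ncard : ℝ) / (n : ℝ)) atTop

/-- `S` is `α`-reduced at `p`. -/
def ReducedAt {G X : Type*} [Group G] [MetricSpace X] [MulAction G X]
    (δ α : ℝ) (S : Set G) (p : X) : Prop :=
  S ∩ S⁻¹ = ∅ ∧
  ∀ u₁ ∈ S ∪ S⁻¹, ∀ u₂ ∈ S ∪ S⁻¹, u₁ ≠ u₂ →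
    gromov (u₁ • p) (u₂ • p) p <
      min (dist (u₁ • p) p) (dist (u₂ • p) p) / 2 - α - 50 * δ

/-- A group is virtually cyclic if it has a cyclic subgroup of finite index. -/
def VirtuallyCyclic (H : Type*) [Group H] : Prop :=
  ∃ K : Subgroup H, IsCyclic K ∧ K.FiniteIndex

/-- A group is virtually nilpotent if it has a nilpotent subgroup of finite index. -/
def VirtuallyNilpotent (H : Type*) [Group H] : Prop :=
  ∃ K : Subgroup H, Group.IsNilpotent K ∧ K.FiniteIndex

/-- An `L`-local `(1,δ)`-quasi-geodesic line. -/
def IsLocalQuasiGeodesic {X : Type*} [MetricSpace X] (L δ : ℝ) (γ : ℝ → X) : Prop :=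
  ∀ s t : ℝ, |s - t| ≤ L → dist (γ s) (γ t) ≤ |s - t| ∧ |s - t| ≤ dist (γ s) (γ t) + δ

/-- `Y` is `σ`-quasi-convex. -/
def SigmaQuasiConvex {X : Type*} [MetricSpace X] (σ : ℝ) (Y : Set X) : Prop :=
  ∀ x : X, ∀ y ∈ Y, ∀ y' ∈ Y, Metric.infDist x Y ≤ gromov y y' x + σ

/-- `y` is a `δ`-projection of `x` on `Y`. -/
def IsDProj {X : Type*} [MetricSpace X] (δ : ℝ) (Y : Set X) (x y : X) : Prop :=
  y ∈ Y ∧ dist x y ≤ Metric.infDist x Y + δ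

/-- `l` is a reduced word over `U ∪ U⁻¹`. -/
def IsWordOver {G : Type*} [Group G] (U : Set G) (l : List G) : Prop :=
  (∀ a ∈ l, a ∈ U ∪ U⁻¹) ∧ l.Chain' fun a b => b ≠ a⁻¹

/-- `l` is a `τ`-shortening word over `Y` (relative to `U` and `p`). -/
def IsShorteningWord {G X : Type*} [Group G] [MetricSpace X] [MulAction G X]
    (δ τ : ℝ) (U : Set G) (p : X) (Y : Set X) (l : List G) : Prop :=
  l ≠ [] ∧ IsWordOver U l ∧
  ∃ y₀ y₁ : X, IsDProj δ Y p y₀ ∧ IsDProj δ Y (l.prod • p) y₁ ∧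
    τ < dist y₀ y₁ ∧
    (∀ a ∈ l.head?, dist p y₀ ≤ dist (a • p) p / 2 - 200 * δ) ∧
    (∀ a ∈ l.getLast?, dist (l.prod • p) y₁ ≤ dist (a • p) p / 2 - 200 * δ)

/-- `l` is a `τ`-shortening-free word relative to the family `Ys`. -/
def ShorteningFreeWord {G X : Type*} [Group G] [MetricSpace X] [MulAction G X]
    (δ τ : ℝ) (U : Set G) (p : X) (Ys : Set (Set X)) (l : List G) : Prop :=
  IsWordOver U l ∧
  ∀ Y ∈ Ys, ∀ l₀ l₁ l₂ : List G, l = l₀ ++ l₁ ++ l₂ → ¬ IsShorteningWord δ τ U p Y l₁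

/-- The word length of an element of a free group. -/
def fgNorm {α : Type*} (w : FreeGroup α) : ℕ :=
  letI := Classical.decEq α
  w.toWord.length

/-- `w` is a prefix of `r` in the free group. -/
def FGPrefix {α : Type*} (w r : FreeGroup α) : Prop :=
  fgNorm r = fgNorm w + fgNorm (w⁻¹ * r)

/-- `r'` is a cyclic permutation of `r`. -/
def IsCyclicPerm {α : Type*} (r r' : FreeGroup α) : Prop :=
  ∃ w v : FreeGroup α, r = w * v ∧ fgNorm r = fgNorm w + fgNorm v ∧
    r' = v * w ∧ fgNorm r' = fgNorm v + fgNorm w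

/-- `q` is a piece of the set of relators `R`. -/
def IsPiece {α : Type*} (R : Set (FreeGroup α)) (q : FreeGroup α) : Prop :=
  q ≠ 1 ∧ ∃ r₁ ∈ R, ∃ r₂ ∈ R, r₁ ≠ r₂ ∧ FGPrefix q r₁ ∧ FGPrefix q r₂

/-- `ξ`-uniform uniform exponential growth: every finitely generated subgroup is
either virtually nilpotent or has `ξ`-uniform exponential growth. -/
def UUEG (ξ : ℝ) (Q : Type*) [Group Q] : Prop :=
  ∀ H : Subgroup Q, H.FG →
    (VirtuallyNilpotent H ∨
      ∀ U : Set H, U.Finite → U⁻¹ = U → Subgroup.closure U = ⊤ → ξ < growthRate U)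
lemma gromov_comm {X : Type*} [MetricSpace X] (x y t : X) : gromov x y t = gromov y x t := by
  unfold gromov
  rw [dist_comm x y]
  ring

lemma gromov_smul {G X : Type*} [Group G] [MetricSpace X] [MulAction G X]
    (hG : IsometricAction G X) (g : G) (x y t : X) :
    gromov (g • x) (g • y) (g • t) = gromov x y t := by
  have h : ∀ a b : X, dist (g • a) (g • b) = dist a b := fun a b => (hG g).dist_eq a b
  simp only [gromov, h]

lemma dist_inv_smul {G X : Type*} [Group G] [MetricSpace X] [MulAction G X]
    (hG : IsometricAction G X) (g : G) (p : X) : dist (g⁻¹ • p) p = dist (g • p) p := by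
  have h := (hG g).dist_eq (g⁻¹ • p) p
  simp only [smul_inv_smul] at h
  rw [← h, dist_comm]

lemma inv_mem_letters {G : Type*} [Group G] {U : Set G} {a : G} (h : a ∈ U ∪ U⁻¹) :
    a⁻¹ ∈ U ∪ U⁻¹ := by
  rcases h with h | h
  · exact Or.inr (by simpa using h)
  · exact Or.inl h

/-- Comparing a letter with its inverse, which is a different letter because `U ∩ U⁻¹ = ∅`, shows
that every letter moves `p` far. -/
lemma ReducedAt.lt_dist {G X : Type*} [Group G] [MetricSpace X] [MulAction G X] {δ α : ℝ}
    {U : Set G} {p : X} (hU : ReducedAt δ α U p) {a : G} (ha : a ∈ U ∪ U⁻¹) :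
    2 * α + 100 * δ < dist (a • p) p := by
  have hne : a ≠ a⁻¹ := by
    intro h
    have hmem : a ∈ U ∩ U⁻¹ := by
      rcases ha with h' | h'
      · exact ⟨h', by rw [Set.mem_inv, ← h]; exact h'⟩
      · exact ⟨by rw [Set.mem_inv, ← h] at h'; exact h', h'⟩
    rw [hU.1] at hmem
    exact hmem
  have h1 := hU.2 a ha a⁻¹ (inv_mem_letters ha) hne
  have h2 : 0 ≤ gromov (a • p) (a⁻¹ • p) p := by
    unfold gromov
    linarith [dist_triangle_right (a • p) (a⁻¹ • p) p, dist_triangle (a • p) p (a⁻¹ • p),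
      dist_comm p (a⁻¹ • p)]
  have h3 := min_le_left (dist (a • p) p) (dist (a⁻¹ • p) p)
  linarith

/-- Seen from `v p`, where `v` is a reduced word with last letter `z`, the point `p` lies in the
direction of the last edge. -/
lemma gromov_last {G X : Type*} [Group G] [MetricSpace X] [MulAction G X] {δ α : ℝ}
    (hδ : 0 < δ) (hα : 3 * δ ≤ α) (hX : IsDeltaHyperbolic X δ) (hG : IsometricAction G X)
    {U : Set G} {p : X} (hU : ReducedAt δ α U p) (l : List G) :
    ∀ z : G, IsWordOver U (l ++ [z]) →
      dist (z • p) p / 2 + α + 49 * δ ≤ gromov p (l.prod • p) ((l ++ [z]).prod • p) := by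
  induction l using List.reverseRecOn with
  | nil =>
    intro z hz
    have h1 := hU.lt_dist (hz.1 z (by simp))
    simp only [gromov, List.prod_nil, one_smul, List.nil_append, List.prod_singleton, dist_self]
    rw [dist_comm p]
    linarith
  | append_singleton l y ih =>
    intro z hz
    have hy : IsWordOver U (l ++ [y]) :=
      ⟨fun a ha => hz.1 a (List.mem_append_left _ ha), (List.isChain_append.1 hz.2).1⟩
    have hzy : z ≠ y⁻¹ := (List.isChain_append.1 hz.2).2.2 y (by simp) z (by simp)
    have hyU := hz.1 y (by simp)
    have hzU := hz.1 z (by simp)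
    have h1 := ih y hy
    have h2 := hU.2 y⁻¹ (inv_mem_letters hyU) z hzU hzy.symm
    rw [dist_inv_smul hG] at h2
    have e1 : (l ++ [y]).prod • y⁻¹ • p = l.prod • p := by simp [smul_smul]
    have e2 : (l ++ [y]).prod • z • p = ((l ++ [y]) ++ [z]).prod • p := by
      simp [smul_smul, mul_assoc]
    rw [← gromov_smul hG (l ++ [y]).prod, e1, e2] at h2
    have e3 : dist (((l ++ [y]) ++ [z]).prod • p) ((l ++ [y]).prod • p) = dist (z • p) p := by
      rw [← e2]
      exact (hG _).dist_eq _ _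
    generalize ((l ++ [y]) ++ [z]).prod • p = C at *
    generalize (l ++ [y]).prod • p = B at *
    generalize l.prod • p = A at *
    have h3 := hX A p C B
    rw [gromov_comm A p B] at h3
    have h4 := min_le_left (dist (y • p) p) (dist (z • p) p)
    have h5 := min_le_right (dist (y • p) p) (dist (z • p) p)
    have h6 : gromov p C B ≤ gromov A C B + δ := by
      rcases min_choice (gromov p A B) (gromov p C B) with h | h <;> rw [h] at h3 <;> linarith
    have h7 : gromov p B C = dist C B - gromov p C B := by
      unfold gromov
      rw [dist_comm B C]
      ring
    linarith

lemma exists_split_of_not_prefix {A : Type*} (l : List A) :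
    ∀ l' : List A, ¬ l <+: l' →
      ∃ c a s s', l = c ++ a :: s ∧ l' = c ++ s' ∧ ∀ b ∈ s'.head?, b ≠ a := by
  induction l with
  | nil => exact fun l' h => absurd l'.nil_prefix h
  | cons x l ih =>
    intro l' h
    by_cases hx : l'.head? = some x
    · obtain ⟨t, rfl⟩ : ∃ t, l' = x :: t := by
        cases l' with
        | nil => simp at hx
        | cons y t => exact ⟨t, by simpa using hx⟩
      obtain ⟨c, a, s, s', h1, h2, h3⟩ := ih t (fun ht => h (by simpa using ht))
      exact ⟨x :: c, a, s, s', by simp [h1], by simp [h2], h3⟩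
    · refine ⟨[], x, l, l', rfl, rfl, fun b hb hbx => hx ?_⟩
      rw [← hbx]
      exact hb

/-- If `w` is not a prefix of `w'`, then free reduction of `w'⁻¹ w` only cancels the common prefix,
and the last letter of `w` survives. -/
lemma exists_reduced_quotient {G : Type*} [Group G] {U : Set G} {l l' : List G}
    (hl : IsWordOver U l) (hl' : IsWordOver U l') (h : l ≠ []) (hp : ¬ l <+: l') :
    ∃ r : List G, IsWordOver U (r ++ [l.getLast h]) ∧
      (r ++ [l.getLast h]).prod = l'.prod⁻¹ * l.prod := by
  obtain ⟨c, a, s, s', rfl, rfl, hne⟩ := exists_split_of_not_prefix l l' hp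
  have hlast : (c ++ a :: s).getLast h = (a :: s).getLast (by simp) := by
    rw [List.getLast_append_of_ne_nil]
  refine ⟨(s'.map fun x => x⁻¹).reverse ++ (a :: s).dropLast, ?_⟩
  rw [hlast, List.append_assoc, List.dropLast_append_getLast]
  refine ⟨⟨?_, ?_⟩, ?_⟩
  · intro x hx
    rcases List.mem_append.1 hx with hx | hx
    · rw [List.mem_reverse, List.mem_map] at hx
      obtain ⟨y, hy, rfl⟩ := hx
      exact inv_mem_letters (hl'.1 y (List.mem_append_right _ hy))
    · exact hl.1 x (List.mem_append_right _ hx)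
  · refine List.isChain_append.2 ⟨?_, (List.isChain_append.1 hl.2).2.1, ?_⟩
    · rw [List.isChain_reverse, List.isChain_map]
      refine (List.isChain_append.1 hl'.2).2.1.imp fun x y hxy hyx => hxy ?_
      simpa using hyx.symm
    · intro x hx y hy
      rw [List.getLast?_reverse, List.head?_map] at hx
      obtain ⟨b, hb, rfl⟩ := Option.mem_map.1 hx
      obtain rfl : a = y := by simpa using hy
      rw [inv_inv]
      exact (hne b hb).symm
  · rw [List.prod_append, List.prod_append, List.prod_append, ← List.prod_inv_reverse]
    group

/-- the geodesic extension property for reduced subsets. -/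
theorem geodesic_extension_property :
    ∀ (G : Type u) [Group G] (X : Type v) [MetricSpace X] [MulAction G X],
    ∀ δ α : ℝ, 0 < δ → 3 * δ ≤ α →
      IsDeltaHyperbolic X δ → IsGeodesicSpace X → IsometricAction G X →
      ∀ (U : Set G) (p : X), U.Finite → ReducedAt δ α U p →
      ∀ l l' : List G, IsWordOver U l → IsWordOver U l' →
      ∀ h : l ≠ [],
        gromov p (l'.prod • p) (l.prod • p) ≤ dist (l.getLast h • p) p / 2 →
        l <+: l' := by
  intro G _ X _ _ δ α hδ hα hX _ hG U p _ hU l l' hl hl' h hle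
  by_contra hp
  obtain ⟨r, hr, hprod⟩ := exists_reduced_quotient hl hl' h hp
  have hsplit : l.dropLast ++ [l.getLast h] = l := List.dropLast_append_getLast h
  have h1 := gromov_last hδ hα hX hG hU l.dropLast (l.getLast h) (by rwa [hsplit])
  rw [hsplit] at h1
  have h2 := gromov_last hδ hα hX hG hU r (l.getLast h) hr
  -- Translation by `w'` carries the path of `w'⁻¹ w` to one from `w' p` to `w p` whose next to last
  -- vertex is also the next to last vertex of the path of `w`.
  have e1 : l'.prod • r.prod • p = l.dropLast.prod • p := by
    have e : l'.prod * r.prod = l.dropLast.prod := by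
      have e2 : l.dropLast.prod * l.getLast h = l.prod := by
        conv_rhs => rw [← hsplit]
        simp
      rw [List.prod_append, List.prod_singleton, ← e2, ← mul_assoc] at hprod
      rw [mul_right_cancel hprod, mul_inv_cancel_left]
    rw [smul_smul, e]
  have e2 : l'.prod • (r ++ [l.getLast h]).prod • p = l.prod • p := by
    rw [hprod, smul_smul, mul_inv_cancel_left]
  rw [← gromov_smul hG l'.prod, e1, e2, gromov_comm] at h2
  have h3 := hX p (l.dropLast.prod • p) (l'.prod • p) (l.prod • p)
  have h4 := le_min h1 h2
  linarith
end
end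

section
/- Let δ > 0, let G be a group acting by isometries on a δ-hyperbolic geodesic metric space X, let U ⊆ G be a finite subset that is 200δ-reduced at p ∈ X, and let Y ⊆ X be a 10δ-quasi-convex subset. Let τ ≥ 2·L(U,p) + 223δ and let w be a τ-shortening word over Y. Then: (i) |w|_U · L(U,p) ≥ τ − 50δ; (ii) if moreover no proper prefix of w is a τ-shortening word over Y, then |w|_U ≤ τ/(200δ) + 1. -/
/-!
Write `w = u₁ ⋯ uₙ`, `xₖ = u₁ ⋯ uₖ p` and let `y₀`, `yₙ` be the given projections of `p` and `w p`.

(i) A projection `y₀` of `p` on the quasi-convex set `Y` satisfies `(p, y)_{y₀} ≤ 12δ` for all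
`y ∈ Y` (`gromov_proj_le`). Applying this at both ends, the four point inequality gives
`d(p, wp) ≥ d(y₀, yₙ) - 50δ` as soon as `d(y₀, yₙ)` is large (`dist_proj_le`), while
`d(p, wp) ≤ n L(U, p)` by the triangle inequality.

(ii) Reducedness makes `x₀, …, xₙ` a broken geodesic with small Gromov products, so by the
local-to-global lemmas `gromov_chain` and `dist_chain`, `(x₀, xₙ)_{xₙ₋₁}` is small and
`d(x₀, xₙ₋₁) ≥ (d(x₀, x₁) + d(xₙ₋₂, xₙ₋₁)) / 2 + 200δ (n - 2)`. The first fact and quasi-convexity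
place `xₙ₋₁` close enough to `Y` for the prefix `u₁ ⋯ uₙ₋₁` to satisfy (S2). As this prefix is not
shortening, (S1) fails for it: the projections of `p` and `xₙ₋₁` are at distance at most `τ`.
Hence `d(x₀, xₙ₋₁)` is at most `(d(x₀, x₁) + d(xₙ₋₂, xₙ₋₁)) / 2 - 400δ + τ`, and comparison with
the lower bound gives `200δ (n - 1) ≤ τ`.
-/

open Pointwise Filter

noncomputable section

universe u v

/-- The four point inequality in terms of sums of distances. -/
lemma four_point {X : Type*} [MetricSpace X] {δ : ℝ} (hX : IsDeltaHyperbolic X δ)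
    (x y z t : X) :
    dist x z + dist y t ≤ max (dist x y + dist z t) (dist y z + dist x t) + 2 * δ := by
  have h := hX x y z t
  unfold gromov at h
  rcases le_total (dist x y + dist z t) (dist y z + dist x t) with h1 | h1
  · rw [max_eq_right h1]
    rw [min_eq_right (by linarith)] at h
    linarith
  · rw [max_eq_left h1]
    rw [min_eq_left (by linarith)] at h
    linarith

/-- Moving from `y₀` towards `x` by the distance `(x, y)_{y₀}` gives a point that is still within
`11δ` of `Y`, because it almost lies between `y₀` and `y`. As `y₀` is almost a nearest point,
that distance is at most `12δ`. -/
lemma gromov_proj_le {X : Type*} [MetricSpace X] {δ : ℝ} (hX : IsDeltaHyperbolic X δ)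
    (hg : IsGeodesicSpace X) {Y : Set X} (hY : SigmaQuasiConvex (10 * δ) Y) {x y₀ y : X}
    (h₀ : IsDProj δ Y x y₀) (hy : y ∈ Y) : gromov x y y₀ ≤ 12 * δ := by
  obtain ⟨f, f0, f1, hf⟩ := hg y₀ x
  have t1 := dist_triangle x y₀ y
  have t2 := dist_triangle y₀ x y
  have t3 := dist_triangle y₀ y x
  have c1 := dist_comm x y₀
  have c2 := dist_comm y y₀
  have c3 := dist_comm y x
  obtain ⟨r, hr⟩ : ∃ r, r = gromov x y y₀ := ⟨_, rfl⟩
  rw [← hr]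
  unfold gromov at hr
  have hr0 : 0 ≤ r := by linarith
  have hr1 : r ≤ dist y₀ x := by linarith
  have m0 : (0 : ℝ) ∈ Set.Icc (0 : ℝ) (dist y₀ x) := ⟨le_rfl, dist_nonneg⟩
  have m1 : dist y₀ x ∈ Set.Icc (0 : ℝ) (dist y₀ x) := ⟨dist_nonneg, le_rfl⟩
  have d0 := hf r ⟨hr0, hr1⟩ 0 m0
  have d1 := hf r ⟨hr0, hr1⟩ _ m1
  rw [f0, sub_zero, abs_of_nonneg hr0] at d0
  rw [f1, abs_of_nonpos (by linarith)] at d1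
  have hq := four_point hX (f r) y₀ y x
  rw [d0, d1] at hq
  have hqy : dist (f r) y ≤ dist y₀ y - r + 2 * δ := by
    have : max (r + dist y x) (dist y₀ y + -(r - dist y₀ x)) ≤ dist y₀ y - r + dist y₀ x :=
      max_le (by linarith) (by linarith)
    linarith
  have hd := hY (f r) y₀ h₀.1 y hy
  unfold gromov at hd
  rw [dist_comm y₀ (f r), dist_comm y (f r), d0] at hd
  have hi : Metric.infDist x Y ≤ Metric.infDist (f r) Y + dist x (f r) :=
    Metric.infDist_le_infDist_add_dist
  rw [dist_comm x (f r), d1] at hi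
  linarith [h₀.2]

/-- Far apart projections on a quasi-convex set contract distances up to `50δ`. -/
lemma dist_proj_le {X : Type*} [MetricSpace X] {δ : ℝ} (hX : IsDeltaHyperbolic X δ)
    (hg : IsGeodesicSpace X) {Y : Set X} (hY : SigmaQuasiConvex (10 * δ) Y) {x x' y y' : X}
    (h : IsDProj δ Y x y) (h' : IsDProj δ Y x' y') (hd : 25 * δ < dist y y') :
    dist y y' - 50 * δ ≤ dist x x' := by
  have h1 := gromov_proj_le hX hg hY h h'.1
  have h2 := gromov_proj_le hX hg hY h' h.1
  have h3 := four_point hX x y y' x'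
  unfold gromov at h1 h2
  rw [dist_comm y' y] at h1
  rw [dist_comm x' y] at h2
  rw [dist_comm y' x'] at h3
  have n1 : 0 ≤ dist x y := dist_nonneg
  have n2 : 0 ≤ dist x' y' := dist_nonneg
  rcases max_cases (dist x y + dist x' y') (dist y y' + dist x x') with ⟨h4, -⟩ | ⟨h4, -⟩ <;>
  · rw [h4] at h3
    linarith

/-- Local-to-global: the Gromov product at `xₖ` of its two neighbours controls that of the
starting point `x₀` and `xₖ₊₁`. -/
lemma gromov_chain {X : Type*} [MetricSpace X] {δ : ℝ} (hδ : 0 < δ) (hX : IsDeltaHyperbolic X δ)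
    (x : ℕ → X) (N : ℕ)
    (h : ∀ k, k + 1 < N → gromov (x k) (x (k + 2)) (x (k + 1)) <
      min (dist (x k) (x (k + 1))) (dist (x (k + 1)) (x (k + 2))) / 2 - 250 * δ) :
    ∀ k, k + 1 < N → gromov (x 0) (x (k + 2)) (x (k + 1)) <
      min (dist (x k) (x (k + 1))) (dist (x (k + 1)) (x (k + 2))) / 2 - 249 * δ := by
  intro k
  induction k with
  | zero =>
    intro hk
    linarith [h 0 hk]
  | succ k ih =>
    intro hk
    have h1 := ih (by omega)
    have h2 := h (k + 1) hk
    -- `(x₀, xₖ₊₁)_{xₖ₊₂} = d(xₖ₊₁, xₖ₊₂) - (x₀, xₖ₊₂)_{xₖ₊₁}` is large, so it is not the minimum.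
    have h4 := hX (x (k + 1)) (x 0) (x (k + 1 + 2)) (x (k + 2))
    have e : gromov (x (k + 1)) (x 0) (x (k + 2)) =
        dist (x (k + 1)) (x (k + 2)) - gromov (x 0) (x (k + 2)) (x (k + 1)) := by
      unfold gromov
      rw [dist_comm (x (k + 1)) (x 0), dist_comm (x (k + 2)) (x (k + 1))]
      ring
    have l1 := min_le_right (dist (x k) (x (k + 1))) (dist (x (k + 1)) (x (k + 2)))
    have l2 := min_le_left (dist (x (k + 1)) (x (k + 2))) (dist (x (k + 2)) (x (k + 3)))
    simp only [add_assoc, Nat.reduceAdd] at *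
    rcases min_choice (gromov (x (k + 1)) (x 0) (x (k + 2)))
      (gromov (x 0) (x (k + 3)) (x (k + 2))) with h5 | h5
    · rw [h5, e] at h4
      linarith
    · rw [h5] at h4
      linarith

/-- Each vertex after `x₁` adds at least `200δ` to the distance from `x₀`; half of the first and
of the last segment remain besides this linear term. -/
lemma dist_chain {X : Type*} [MetricSpace X] {δ : ℝ} (hδ : 0 < δ) (hX : IsDeltaHyperbolic X δ)
    (x : ℕ → X) (N : ℕ)
    (h : ∀ k, k + 1 < N → gromov (x k) (x (k + 2)) (x (k + 1)) <
      min (dist (x k) (x (k + 1))) (dist (x (k + 1)) (x (k + 2))) / 2 - 250 * δ) :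
    ∀ k, k < N → dist (x 0) (x 1) / 2 + dist (x k) (x (k + 1)) / 2 + k * (200 * δ) ≤
      dist (x 0) (x (k + 1)) := by
  intro k
  induction k with
  | zero =>
    intro _
    simp
  | succ k ih =>
    intro hk
    have h1 := ih (by omega)
    have h2 := gromov_chain hδ hX x N h k hk
    have l1 := min_le_right (dist (x k) (x (k + 1))) (dist (x (k + 1)) (x (k + 2)))
    have l2 := min_le_left (dist (x k) (x (k + 1))) (dist (x (k + 1)) (x (k + 2)))
    unfold gromov at h2
    rw [dist_comm (x (k + 2)) (x (k + 1))] at h2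
    push_cast
    simp only [add_assoc, Nat.reduceAdd] at *
    linarith

/-- length bounds for shortening words. -/
theorem shortening_bounds :
    ∀ (G : Type u) [Group G] (X : Type v) [MetricSpace X] [MulAction G X],
    ∀ δ : ℝ, 0 < δ →
      IsDeltaHyperbolic X δ → IsGeodesicSpace X → IsometricAction G X →
      ∀ (p : X) (U : Set G), U.Finite → ReducedAt δ (200 * δ) U p →
      ∀ Y : Set X, SigmaQuasiConvex (10 * δ) Y →
      ∀ τ : ℝ, 2 * energyAt U p + 223 * δ ≤ τ →
      ∀ l : List G, IsShorteningWord δ τ U p Y l →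
        (τ - 50 * δ ≤ (l.length : ℝ) * energyAt U p) ∧
        ((∀ l' : List G, l' <+: l → 0 < l'.length → l'.length < l.length →
            ¬ IsShorteningWord δ τ U p Y l') →
          (l.length : ℝ) ≤ τ / (200 * δ) + 1) := by
  intro G _ X _ _ δ hδ hX hg hact p U hU hred Y hY τ hτ l hl
  obtain ⟨hne, ⟨hmem, hch⟩, y₀, y₁, hy₀, hy₁, hd, hS, hS'⟩ := hl
  have hiso : ∀ (g : G) (a b : X), dist (g • a) (g • b) = dist a b := fun g a b =>
    (hact g).dist_eq a b
  have hinv : ∀ g : G, dist (g⁻¹ • p) p = dist (g • p) p := by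
    intro g
    rw [← hiso g, smul_inv_smul, dist_comm]
  have hL : ∀ a ∈ U ∪ U⁻¹, dist (a • p) p ≤ energyAt U p := by
    have hb : BddAbove ((fun u : G => dist (u • p) p) '' U) := (hU.image _).bddAbove
    rintro a (ha | ha)
    · exact le_csSup hb ⟨a, ha, rfl⟩
    · exact le_csSup hb ⟨a⁻¹, ha, hinv a⟩
  have hL0 : 0 ≤ energyAt U p := by
    obtain ⟨a, ha⟩ := List.exists_mem_of_ne_nil l hne
    exact dist_nonneg.trans (hL a (hmem a ha))
  obtain ⟨x, hx⟩ : ∃ x : ℕ → X, ∀ i, x i = (l.take i).prod • p := ⟨_, fun _ => rfl⟩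
  have hx0 : x 0 = p := by simp [hx]
  have hxl : x l.length = l.prod • p := by simp [hx]
  have hxs : ∀ i (hi : i < l.length), x (i + 1) = (l.take i).prod • (l[i] • p) := by
    intro i hi
    rw [hx, List.prod_take_succ _ _ hi, mul_smul]
  have hxd : ∀ i (hi : i < l.length), dist (x i) (x (i + 1)) = dist (l[i] • p) p := by
    intro i hi
    rw [hxs i hi, hx, hiso, dist_comm]
  have hD := dist_proj_le hX hg hY hy₀ hy₁ (by linarith)
  refine ⟨?_, ?_⟩
  · have hle : ∀ i, i ≤ l.length → dist (x 0) (x i) ≤ i * energyAt U p := by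
      intro i
      induction i with
      | zero => simp
      | succ i ih =>
        intro hi
        have h1 := ih (by omega)
        have h2 := dist_triangle (x 0) (x i) (x (i + 1))
        rw [hxd i hi] at h2
        have h3 := hL _ (hmem _ (List.getElem_mem hi))
        push_cast
        linarith
    have h1 := hle _ le_rfl
    rw [hx0, hxl] at h1
    linarith
  intro hmin
  have hloc : ∀ k, k + 1 < l.length → gromov (x k) (x (k + 2)) (x (k + 1)) <
      min (dist (x k) (x (k + 1))) (dist (x (k + 1)) (x (k + 2))) / 2 - 250 * δ := by
    intro k hk
    have hk' : k < l.length := by omega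
    have hneq : l[k + 1] ≠ l[k]⁻¹ := List.isChain_iff_getElem.1 hch k hk
    have hm : l[k]⁻¹ ∈ U ∪ U⁻¹ := by
      rcases hmem _ (List.getElem_mem hk') with h | h
      · exact Or.inr (by simpa using h)
      · exact Or.inl h
    have h := hred.2 _ hm _ (hmem _ (List.getElem_mem hk)) hneq.symm
    rw [hinv, ← hxd k hk', ← hxd (k + 1) hk] at h
    have e1 : (l.take (k + 1)).prod • (l[k]⁻¹ • p) = x k := by
      rw [List.prod_take_succ _ _ hk', mul_smul, smul_inv_smul, hx]
    have e : gromov (l[k]⁻¹ • p) (l[k + 1] • p) p = gromov (x k) (x (k + 2)) (x (k + 1)) := by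
      rw [hxs (k + 1) hk, ← e1, hx (k + 1)]
      simp only [gromov, hiso]
    rw [e] at h
    simp only [add_assoc, Nat.reduceAdd] at h
    linarith
  have hτ0 : 0 ≤ τ := by linarith
  have h200 : 0 < 200 * δ := by linarith
  obtain hn | ⟨m, hn⟩ : l.length ≤ 1 ∨ ∃ m, l.length = m + 2 := by
    rcases Nat.lt_or_ge l.length 2 with h | h
    · exact Or.inl (by omega)
    · exact Or.inr ⟨l.length - 2, by omega⟩
  · have : (l.length : ℝ) ≤ 1 := by exact_mod_cast hn
    have := div_nonneg hτ0 h200.le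
    linarith
  have hc1 := gromov_chain hδ hX x _ hloc m (by omega)
  have hc2 := dist_chain hδ hX x _ hloc m (by omega)
  have hwp : x (m + 2) = l.prod • p := by rw [← hxl, hn]
  have hhead : l.head? = some (l[0]'(by omega)) := by
    rw [List.head?_eq_getElem?, List.getElem?_eq_getElem]
  have hlast : l.getLast? = some (l[m + 1]'(by omega)) := by
    rw [List.getLast?_eq_getElem?, show l.length - 1 = m + 1 by omega,
      List.getElem?_eq_getElem]
  have hS1 := hS _ hhead
  have hS2 := hS' _ hlast
  rw [← hxd 0 (by omega), ← hx0] at hS1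
  rw [← hxd (m + 1) (by omega), ← hwp] at hS2
  simp only [zero_add, add_assoc, Nat.reduceAdd] at hS1 hS2
  have l1 := min_le_left (dist (x m) (x (m + 1))) (dist (x (m + 1)) (x (m + 2)))
  have l2 := min_le_right (dist (x m) (x (m + 1))) (dist (x (m + 1)) (x (m + 2)))
  have hm0 : 0 ≤ (m : ℝ) * (200 * δ) := by positivity
  -- `xₙ₋₁` projects to the part of `[x₀, xₙ]` between `y₀` and `y₁`, where `Y` is close.
  have hgy : gromov y₀ y₁ (x (m + 1)) ≤ gromov (x 0) (x (m + 2)) (x (m + 1)) + 2 * δ := by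
    have a1 := hX (x 0) y₀ (x (m + 2)) (x (m + 1))
    have a2 := hX y₀ y₁ (x (m + 2)) (x (m + 1))
    have b1 : dist (x 0) (x (m + 1)) - dist (x 0) y₀ ≤ gromov (x 0) y₀ (x (m + 1)) := by
      unfold gromov
      linarith [dist_triangle (x 0) y₀ (x (m + 1))]
    have b2 : dist (x (m + 1)) (x (m + 2)) - dist (x (m + 2)) y₁ ≤
        gromov y₁ (x (m + 2)) (x (m + 1)) := by
      unfold gromov
      rw [dist_comm y₁ (x (m + 2)), dist_comm (x (m + 1)) (x (m + 2))]
      linarith [dist_triangle (x (m + 2)) y₁ (x (m + 1))]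
    rcases min_choice (gromov (x 0) y₀ (x (m + 1))) (gromov y₀ (x (m + 2)) (x (m + 1)))
      with h | h
    · rw [h] at a1
      linarith
    rw [h] at a1
    rcases min_choice (gromov y₀ y₁ (x (m + 1))) (gromov y₁ (x (m + 2)) (x (m + 1)))
      with h' | h'
    · rw [h'] at a2
      linarith
    · rw [h'] at a2
      linarith
  have hYd := hY (x (m + 1)) y₀ hy₀.1 y₁ hy₁.1
  obtain ⟨y, hyY, hy⟩ := (Metric.infDist_lt_iff ⟨y₀, hy₀.1⟩).1
    (lt_add_of_pos_right (Metric.infDist (x (m + 1)) Y) hδ)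
  have hyd : dist (x (m + 1)) y ≤ dist (x m) (x (m + 1)) / 2 - 200 * δ := by linarith
  have hlen : (l.take (m + 1)).length = m + 1 := by
    rw [List.length_take, hn]
    omega
  have hS1τ : dist y₀ y ≤ τ := by
    by_contra! hlt
    refine hmin (l.take (m + 1)) (List.take_prefix _ _) (by omega) (by omega)
      ⟨?_, ⟨fun a ha => hmem a (List.mem_of_mem_take ha), List.IsChain.take hch _⟩, y₀, y, hy₀,
        ⟨hyY, ?_⟩, hlt, ?_, ?_⟩
    · intro h
      simp [h] at hlen
    · rw [← hx]
      exact hy.le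
    · intro a ha
      apply hS a
      rwa [List.head?_take, if_neg (by omega)] at ha
    · intro a ha
      rw [List.getLast?_eq_getElem?, hlen, Nat.add_sub_cancel, List.getElem?_take,
        if_pos (by omega), List.getElem?_eq_getElem (by omega : m < l.length)] at ha
      obtain rfl := Option.some.inj ha
      rw [← hx, ← hxd m (by omega)]
      exact hyd
  have ht := dist_triangle4 (x 0) y₀ y (x (m + 1))
  rw [dist_comm y (x (m + 1))] at ht
  have hfin : ((m : ℝ) + 1) * (200 * δ) ≤ τ := by linarith
  rw [← le_div_iff₀ h200] at hfin
  rw [hn]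
  push_cast
  linarith
end
end
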